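/- Let A be an (n,d)-type whose type graph K_A is acyclic, and let B be an (n,d)-type with B_i ⊆ A_i for every i ∈ [n]. Then there exists an ordered partition P of [d] such that B = A|_P, the refinement of A with respect to P. Consequently, if M is a tropical oriented matroid in general position and A ∈ M, then every (n,d)-type B with B_i ⊆ A_i for all i belongs to M. -/

import Mathlib

/-- A step from `j` to `k` along an edge of the comparability graph `Γ(A,B)`,
traversed in an allowed direction: there is `i` with `j ∈ A i`, `k ∈ B i`, `j ≠ k`
(such an edge is undirected precisely when moreover `j ∈ B i` and `k ∈ A i`, and then
the reversed step is also of this form). -/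
def CompStep {n d : ℕ} (A B : Fin n → Finset (Fin d)) (j k : Fin d) : Prop :=
  ∃ i, j ∈ A i ∧ k ∈ B i ∧ j ≠ k

/-- A traversal of a *directed* edge of `Γ(A,B)` in its given direction. -/
def CompDirStep {n d : ℕ} (A B : Fin n → Finset (Fin d)) (j k : Fin d) : Prop :=
  ∃ i, j ∈ A i ∧ k ∈ B i ∧ j ≠ k ∧ ¬ (j ∈ B i ∧ k ∈ A i)

/-- The comparability graph `Γ(A,B)` is acyclic: there is no closed walk consisting
of legally traversed edges at least one of which is directed. -/
def CompAcyclic {n d : ℕ} (A B : Fin n → Finset (Fin d)) : Prop :=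
  ¬ ∃ j k : Fin d, CompDirStep A B j k ∧ Relation.ReflTransGen (CompStep A B) k j

/-- An ordered partition of the ground set: a list of nonempty, pairwise disjoint
sets covering everything. -/
def IsOrderedPartition {α : Type*} [Fintype α] [DecidableEq α]
    (P : List (Finset α)) : Prop :=
  (∀ p ∈ P, p.Nonempty) ∧ P.Pairwise Disjoint ∧ P.foldr (· ∪ ·) ∅ = Finset.univ

/-- `refineEntry s P = s ∩ P_{m}` where `m` is the first index with `s ∩ P_m ≠ ∅`. -/
def refineEntry {α : Type*} [DecidableEq α] (s : Finset α) :
    List (Finset α) → Finset α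
  | [] => ∅
  | p :: rest => if (s ∩ p).Nonempty then s ∩ p else refineEntry s rest

/-- The refinement `A|_P` of a type `A` with respect to an ordered partition `P`. -/
def refineType {n d : ℕ} (A : Fin n → Finset (Fin d)) (P : List (Finset (Fin d))) :
    Fin n → Finset (Fin d) :=
  fun i => refineEntry (A i) P

/-- `M` is a tropical oriented matroid with parameters `(n,d)`. -/
def IsTOM (n d : ℕ) (M : Set (Fin n → Finset (Fin d))) : Prop :=
  (∀ A ∈ M, ∀ i, (A i).Nonempty) ∧
  (∀ j : Fin d, (fun _ : Fin n => ({j} : Finset (Fin d))) ∈ M) ∧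
  (∀ A ∈ M, ∀ B ∈ M, CompAcyclic A B) ∧
  (∀ A ∈ M, ∀ B ∈ M, ∀ j : Fin n, ∃ C ∈ M, C j = A j ∪ B j ∧
      ∀ k, C k = A k ∨ C k = B k ∨ C k = A k ∪ B k) ∧
  (∀ A ∈ M, ∀ P : List (Finset (Fin d)), IsOrderedPartition P → refineType A P ∈ M)

/-- The type graph `K_A`: the bipartite graph on `N_1,…,N_n,D_1,…,D_d` with an edge
`{N_i, D_j}` whenever `j ∈ A_i`. -/
def typeGraph {n d : ℕ} (A : Fin n → Finset (Fin d)) : SimpleGraph (Fin n ⊕ Fin d) :=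
  SimpleGraph.fromRel (fun x y =>
    match x, y with
    | Sum.inl i, Sum.inr j => j ∈ A i
    | _, _ => False)

/-- The dimension of a type: the number of connected components of `K_A` minus 1
(as an integer). -/
noncomputable def typeDim {n d : ℕ} (A : Fin n → Finset (Fin d)) : ℤ :=
  (Nat.card (typeGraph A).ConnectedComponent : ℤ) - 1

/-- A tropical oriented matroid is in general position if all its type graphs are
acyclic. -/
def InGeneralPosition {n d : ℕ} (M : Set (Fin n → Finset (Fin d))) : Prop :=
  ∀ A ∈ M, (typeGraph A).IsAcyclic

/-- Two types are incident if one is an entrywise subset of the other. -/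
def Incident {n d : ℕ} (X Y : Fin n → Finset (Fin d)) : Prop :=
  (∀ i, X i ⊆ Y i) ∨ (∀ i, Y i ⊆ X i)

/-- The combinatorial convex hull `M_{AB}` of two types within a collection `M`. -/
def Hull {n d : ℕ} (M : Set (Fin n → Finset (Fin d)))
    (A B : Fin n → Finset (Fin d)) : Set (Fin n → Finset (Fin d)) :=
  {C | C ∈ M ∧ ∀ i, C i = A i ∨ C i = B i ∨ C i = A i ∪ B i}

/-- `X` and `Y` are joined by a finite sequence of types in `S` in which consecutive
types are incident. -/
def ConnectedIn {n d : ℕ} (S : Set (Fin n → Finset (Fin d)))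
    (X Y : Fin n → Finset (Fin d)) : Prop :=
  Relation.ReflTransGen (fun U V => U ∈ S ∧ V ∈ S ∧ Incident U V) X Y

theorem acyclic_potential {V : Type*} [Finite V] (w : V → V → ℤ) (hw : ∀ x y, w x y = - w y x) :
    ∀ (m : ℕ) (G : SimpleGraph V), G.edgeSet.ncard = m → G.IsAcyclic →
      ∃ p : V → ℤ, ∀ x y, G.Adj x y → p y - p x = w x y := by
  classical
  intro m
  induction m with
  | zero =>
    intro G hG _
    refine ⟨fun _ => 0, fun x y hxy => ?_⟩
    rw [Set.ncard_eq_zero (Set.toFinite _)] at hG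
    have : s(x, y) ∈ G.edgeSet := hxy
    simp [hG] at this
  | succ m ih =>
    intro G hG hA
    have hne : G.edgeSet.Nonempty := by
      rw [← Set.ncard_pos (Set.toFinite _)]; omega
    obtain ⟨e, he⟩ := hne
    induction e using Sym2.ind with
    | _ a b =>
    have hab : G.Adj a b := he
    have hbr := (SimpleGraph.isAcyclic_iff_forall_adj_isBridge.1 hA) hab
    rw [SimpleGraph.isBridge_iff] at hbr
    have hnr : ¬ (G.deleteEdges {s(a, b)}).Reachable a b := by
      simpa [SimpleGraph.deleteEdges] using hbr
    obtain ⟨p, hp⟩ := ih (G.deleteEdges {s(a, b)}) (by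
        rw [SimpleGraph.edgeSet_deleteEdges, Set.ncard_diff_singleton_of_mem he, hG]; rfl)
      (hA.anti (SimpleGraph.deleteEdges_le _))
    set H := G.deleteEdges {s(a, b)} with hH
    have key : ∀ x y, H.Adj x y → (H.Reachable b x ↔ H.Reachable b y) := fun x y h =>
      ⟨fun hx => hx.trans h.reachable, fun hy => hy.trans h.symm.reachable⟩
    have hna : ¬ H.Reachable b a := fun h => hnr h.symm
    have hbb : H.Reachable b b := SimpleGraph.Reachable.refl _
    refine ⟨fun z => if H.Reachable b z then p z + (w a b - (p b - p a)) else p z, ?_⟩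
    intro x y hxy
    by_cases hE : s(x, y) = s(a, b)
    · rw [Sym2.eq_iff] at hE
      rcases hE with ⟨rfl, rfl⟩ | ⟨rfl, rfl⟩
      · simp only [hna, hbb, if_true, if_false]; ring
      · simp only [hna, hbb, if_true, if_false]; rw [hw x y]; ring
    · have hadj : H.Adj x y := by
        rw [hH, SimpleGraph.deleteEdges_adj]; exact ⟨hxy, by simpa using hE⟩
      have h1 := hp x y hadj
      have h2 := key x y hadj
      by_cases hx : H.Reachable b x
      · simp only [hx, h2.1 hx, if_true]; linarith
      · have hy : ¬ H.Reachable b y := fun h => hx (h2.2 h)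
        simp only [hx, hy, if_false]; linarith

theorem refineEntry_levels {d : ℕ} (h : Fin d → ℤ) (s : Finset (Fin d)) (m : ℤ)
    (hm : ∃ j ∈ s, h j = m) (hmin : ∀ j ∈ s, m ≤ h j) :
    ∀ L : List ℤ, L.Pairwise (· < ·) → m ∈ L →
      refineEntry s (L.map fun v => Finset.univ.filter fun j => h j = v)
        = s.filter fun j => h j = m := by
  intro L
  induction L with
  | nil => intro _ h; simp at h
  | cons v L ih =>
    intro hL hmem
    rw [List.pairwise_cons] at hL
    simp only [List.map_cons, refineEntry]
    have hin : s ∩ Finset.univ.filter (fun j => h j = v) = s.filter fun j => h j = v := by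
      ext j; simp
    rw [hin]
    rcases List.mem_cons.1 hmem with rfl | hmL
    · obtain ⟨j, hj, hjm⟩ := hm
      rw [if_pos ⟨j, by simp [hj, hjm]⟩]
    · have hlt := hL.1 m hmL
      rw [if_neg, ih hL.2 hmL]
      rintro ⟨j, hj⟩
      rw [Finset.mem_filter] at hj
      have := hmin j hj.1
      omega

theorem mem_foldr_union {α : Type*} [DecidableEq α] (L : List (Finset α)) (x : α) :
    x ∈ L.foldr (· ∪ ·) ∅ ↔ ∃ p ∈ L, x ∈ p := by
  induction L with
  | nil => simp
  | cons p L ih => simp [ih]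

theorem part_one {n d : ℕ} (A B : Fin n → Finset (Fin d))
    (hA : (typeGraph A).IsAcyclic) (hB : ∀ i, (B i).Nonempty) (hBA : ∀ i, B i ⊆ A i) :
    ∃ P : List (Finset (Fin d)), IsOrderedPartition P ∧ B = refineType A P := by
  classical
  let w : Fin n ⊕ Fin d → Fin n ⊕ Fin d → ℤ := fun x y =>
    match x, y with
    | Sum.inl i, Sum.inr j => if j ∈ B i then 0 else 1
    | Sum.inr j, Sum.inl i => if j ∈ B i then 0 else -1
    | _, _ => 0
  have hw : ∀ x y, w x y = - w y x := by
    rintro (i | i) (j | j) <;> simp only [w] <;> (try split_ifs) <;> simp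
  obtain ⟨p, hp⟩ := acyclic_potential w hw _ (typeGraph A) rfl hA
  let h : Fin d → ℤ := fun j => p (Sum.inr j)
  have h1 : ∀ i, ∀ j ∈ A i, h j = p (Sum.inl i) + if j ∈ B i then 0 else 1 := by
    intro i j hj
    have := hp (Sum.inl i) (Sum.inr j) (by simp [typeGraph, hj])
    simp only [w] at this
    simp only [h]; linarith
  refine ⟨((Finset.univ.image h).sort (· ≤ ·)).map
    (fun v => Finset.univ.filter fun j => h j = v), ⟨?_, ?_, ?_⟩, ?_⟩
  · intro q hq
    simp only [List.mem_map, Finset.mem_sort, Finset.mem_image] at hq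
    obtain ⟨v, ⟨j, _, hj⟩, rfl⟩ := hq
    exact ⟨j, by simp [hj]⟩
  · rw [List.pairwise_map]
    refine (Finset.sortedLT_sort _).pairwise.imp ?_
    intro a b hab
    rw [Finset.disjoint_left]
    intro x hx hx'
    simp only [Finset.mem_filter] at hx hx'
    omega
  · ext x
    rw [mem_foldr_union]
    simp
  · funext i
    obtain ⟨b, hb⟩ := hB i
    have hbv : h b = p (Sum.inl i) := by simpa [hb] using h1 i b (hBA i hb)
    rw [refineType, refineEntry_levels h (A i) (p (Sum.inl i)) ⟨b, hBA i hb, hbv⟩ ?_ _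
      (Finset.sortedLT_sort _).pairwise (by simp [← hbv])]
    · ext j
      rw [Finset.mem_filter]
      constructor
      · intro hj; exact ⟨hBA i hj, by simpa [hj] using h1 i j (hBA i hj)⟩
      · rintro ⟨hj, hv⟩
        by_contra hc
        have := h1 i j hj
        rw [if_neg hc] at this
        omega
    · intro j hj
      have := h1 i j hj
      split_ifs at this <;> omega

theorem stmt_3 {n d : ℕ} (hn : 1 ≤ n) (hd : 1 ≤ d) :
    (∀ A B : Fin n → Finset (Fin d),
      (∀ i, (A i).Nonempty) → (typeGraph A).IsAcyclic →
      (∀ i, (B i).Nonempty) → (∀ i, B i ⊆ A i) →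
      ∃ P : List (Finset (Fin d)), IsOrderedPartition P ∧ B = refineType A P) ∧
    (∀ M : Set (Fin n → Finset (Fin d)), IsTOM n d M → InGeneralPosition M →
      ∀ A ∈ M, ∀ B : Fin n → Finset (Fin d),
        (∀ i, (B i).Nonempty) → (∀ i, B i ⊆ A i) → B ∈ M) := by
  exact ⟨fun A B _ hA hB hBA => part_one A B hA hB hBA, fun M hM hG A hAM B hB hBA => by
    obtain ⟨P, hP, rfl⟩ := part_one A B (hG A hAM) hB hBA
    exact hM.2.2.2.2 A hAM P hP⟩
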